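/- A finite simple graph G has a perfect matching if and only if for every subset S of vertices, the number of connected components of G - S with an odd number of vertices is at most the cardinality of S. -/

import Mathlib

theorem aux_odd_iso {V W : Type*} {G : SimpleGraph V} {H : SimpleGraph W} (e : G ≃g H) :
    G.oddComponents.ncard = {c : H.ConnectedComponent | Odd (Nat.card c.supp)}.ncard := by
  have key : ∀ c : G.ConnectedComponent,
      Nat.card (e.connectedComponentEquiv c).supp = c.supp.ncard := by
    intro c
    rw [← Nat.card_coe_set_eq]
    exact (Nat.card_congr (SimpleGraph.ConnectedComponent.isoEquivSupp e c)).symm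
  rw [← Set.ncard_image_of_injective _ e.connectedComponentEquiv.injective]
  congr 1
  ext d
  obtain ⟨c, rfl⟩ := e.connectedComponentEquiv.surjective d
  rw [Set.mem_setOf_eq, key, e.connectedComponentEquiv.injective.mem_set_image]
  rfl

/-- Tutte's theorem: a finite simple graph has a perfect matching iff for every
vertex set `S`, the number of odd components of `G - S` is at most `|S|`. -/
theorem tutte_theorem {V : Type*} [Fintype V] (G : SimpleGraph V) :
    (∃ M : G.Subgraph, M.IsPerfectMatching) ↔
      ∀ S : Set V,
        {c : (G.induce Sᶜ).ConnectedComponent | Odd (Nat.card c.supp)}.ncard ≤ S.ncard := by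
  rw [SimpleGraph.tutte]
  refine forall_congr' fun S => ?_
  let e : ((⊤ : G.Subgraph).deleteVerts S).coe ≃g G.induce Sᶜ :=
    { toEquiv := Equiv.setCongr (by ext v; simp)
      map_rel_iff' := by
        rintro ⟨a, ha⟩ ⟨b, hb⟩
        simp at ha hb
        simp [ha, hb] }
  rw [SimpleGraph.IsTutteViolator, not_lt, aux_odd_iso e]
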